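/- arXiv:2511.06690 — 4 statements merged into one kernel-verified Lean document; each statement's English description precedes it below -/
import Mathlib

section
/- Let X and Y be real Banach spaces and let A : X → Y be a bounded linear operator whose null-space N(A) is uncomplemented in X, i.e., there is no closed subspace V of X with N(A) ∩ V = {0} and N(A) + V = X. Then for every (not necessarily closed) linear subspace U of X with N(A) ∩ U = {0} and N(A) + U = X, there is no constant C > 0 such that ‖u‖ ≤ C·‖A u‖ for all u ∈ U; that is, the pseudoinverse A†_U : R(A) → U is always unbounded. -/
/-!
By continuity, a bound `‖u‖ ≤ C * ‖A u‖` on `U` persists on the closure of `U`, which therefore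
still meets `ker A` trivially. Two nested subspaces, the smaller spanning `X` together with `ker A`
and the larger meeting `ker A` trivially, coincide by modularity. So a complement of `ker A` with
bounded pseudoinverse is closed.
-/

theorem disjoint_ker_of_norm_le_mul_norm_apply {R S X Y : Type*} [Semiring R] [Semiring S]
    {σ : R →+* S} [NormedAddCommGroup X] [Module R X] [SeminormedAddCommGroup Y] [Module S Y]
    {f : X →ₛₗ[σ] Y} {U : Submodule R X} {C : ℝ} (hC : ∀ u ∈ U, ‖u‖ ≤ C * ‖f u‖) :
    Disjoint (LinearMap.ker f) U := by
  refine Submodule.disjoint_def.2 fun x hx hxU => norm_le_zero_iff.1 ?_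
  calc ‖x‖ ≤ C * ‖f x‖ := hC x hxU
    _ = 0 := by rw [LinearMap.mem_ker.1 hx, norm_zero, mul_zero]

section

variable {R S X Y : Type*} [Ring R] [Semiring S] {σ : R →+* S}
  [NormedAddCommGroup X] [Module R X] [ContinuousConstSMul R X]
  [SeminormedAddCommGroup Y] [Module S Y]

theorem isClosed_of_ker_sup_eq_top_of_norm_le_mul_norm_apply {A : X →SL[σ] Y}
    {U : Submodule R X} (hsup : LinearMap.ker (A : X →ₛₗ[σ] Y) ⊔ U = ⊤)
    {C : ℝ} (hC : ∀ u ∈ U, ‖u‖ ≤ C * ‖A u‖) : IsClosed (U : Set X) := by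
  have hC_closure : ∀ v ∈ U.topologicalClosure, ‖v‖ ≤ C * ‖A v‖ :=
    le_on_closure hC (by fun_prop) (by fun_prop)
  have hdisj : Disjoint U.topologicalClosure (LinearMap.ker (A : X →ₛₗ[σ] Y)) :=
    (disjoint_ker_of_norm_le_mul_norm_apply hC_closure).symm
  have hcodisj : Codisjoint U (LinearMap.ker (A : X →ₛₗ[σ] Y)) :=
    (codisjoint_iff.2 hsup).symm
  have hU : U = U.topologicalClosure :=
    eq_of_le_of_inf_le_of_sup_le U.le_topologicalClosure
      (hdisj.eq_bot.trans_le bot_le) (le_top.trans_eq hcodisj.eq_top.symm)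
  rw [hU]
  exact U.isClosed_topologicalClosure

theorem pseudoinverse_unbounded_of_uncomplemented_ker_general (A : X →SL[σ] Y)
    (huncompl : ¬ ∃ V : Submodule R X, IsClosed (V : Set X) ∧
      LinearMap.ker (A : X →ₛₗ[σ] Y) ⊓ V = ⊥ ∧ LinearMap.ker (A : X →ₛₗ[σ] Y) ⊔ V = ⊤) :
    ∀ U : Submodule R X, LinearMap.ker (A : X →ₛₗ[σ] Y) ⊔ U = ⊤ →
      ¬ ∃ C : ℝ, ∀ u ∈ U, ‖u‖ ≤ C * ‖A u‖ := by
  rintro U hsup ⟨C, hC⟩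
  have hclosed : IsClosed (U : Set X) :=
    isClosed_of_ker_sup_eq_top_of_norm_le_mul_norm_apply hsup hC
  have hdisj : Disjoint (LinearMap.ker (A : X →ₛₗ[σ] Y)) U :=
    disjoint_ker_of_norm_le_mul_norm_apply hC
  exact huncompl ⟨U, hclosed, hdisj.eq_bot, hsup⟩

end

/-- If the null-space of a bounded linear operator `A : X → Y` between real Banach
spaces is uncomplemented in `X`, then for every (not necessarily closed) algebraic complement `U`
of `N(A)` the pseudoinverse `A†_U` is unbounded, i.e. no `C > 0` satisfies `‖u‖ ≤ C‖Au‖` on `U`. -/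
theorem pseudoinverse_unbounded_of_uncomplemented_ker
    {X Y : Type*} [NormedAddCommGroup X] [NormedSpace ℝ X] [CompleteSpace X]
    [NormedAddCommGroup Y] [NormedSpace ℝ Y] [CompleteSpace Y]
    (A : X →L[ℝ] Y)
    (huncompl : ¬ ∃ V : Submodule ℝ X, IsClosed (V : Set X) ∧
      LinearMap.ker (A : X →ₗ[ℝ] Y) ⊓ V = ⊥ ∧ LinearMap.ker (A : X →ₗ[ℝ] Y) ⊔ V = ⊤) :
    ∀ U : Submodule ℝ X, LinearMap.ker (A : X →ₗ[ℝ] Y) ⊓ U = ⊥ → LinearMap.ker (A : X →ₗ[ℝ] Y) ⊔ U = ⊤ →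
      ¬ ∃ C : ℝ, 0 < C ∧ ∀ u ∈ U, ‖u‖ ≤ C * ‖A u‖ :=
  fun U _ hsup ⟨C, _, hC⟩ =>
    pseudoinverse_unbounded_of_uncomplemented_ker_general A huncompl U hsup ⟨C, hC⟩
end

section
/- Let X and Y be infinite-dimensional real Banach spaces and let A : X → Y be a bounded linear operator of hybrid type, i.e., A is strictly singular and the range R(A) contains an infinite-dimensional closed linear subspace M of Y. Then the null-space N(A) is uncomplemented in X: there is no closed subspace U of X with N(A) ∩ U = {0} and N(A) + U = X. -/
/-- A bounded linear operator is strictly singular if its restriction to any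
infinite-dimensional closed subspace of the domain is not bounded below. -/
def StrictlySingular {X Y : Type*} [NormedAddCommGroup X] [NormedSpace ℝ X]
    [NormedAddCommGroup Y] [NormedSpace ℝ Y] (A : X →L[ℝ] Y) : Prop :=
  ∀ Z : Submodule ℝ X, IsClosed (Z : Set X) → ¬ FiniteDimensional ℝ Z →
    ¬ ∃ c : ℝ, 0 < c ∧ ∀ z ∈ Z, c * ‖z‖ ≤ ‖A z‖

/-!
If `U` were a closed complement of the kernel, then `A` would map `Z = U ∩ A⁻¹(M)` bijectively onto
the Banach space `M`. By the open mapping theorem `A` is bounded below on `Z`, so strict singularity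
forces `Z`, and hence `M = A(Z)`, to be finite-dimensional.
-/

theorem isComplete_inter_of_isClosed {α : Type*} [UniformSpace α] {s t : Set α}
    (hs : IsComplete s) (ht : IsClosed t) : IsComplete (s ∩ t) := by
  intro l hl hle
  obtain ⟨x, hxs, hlx⟩ := hs l hl (hle.trans (Filter.principal_mono.2 Set.inter_subset_left))
  have hlt : l ≤ Filter.principal t := hle.trans (Filter.principal_mono.2 Set.inter_subset_right)
  exact ⟨x, ⟨hxs, isClosed_iff_forall_filter.1 ht x l hl.1 hlt hlx⟩, hlx⟩

section BoundedBelow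

variable {𝕜 E F : Type*} [NontriviallyNormedField 𝕜]
  [NormedAddCommGroup E] [NormedSpace 𝕜 E] [NormedAddCommGroup F] [NormedSpace 𝕜 F]

theorem exists_antilipschitzWith_of_injective_of_isComplete_range [CompleteSpace E]
    (f : E →L[𝕜] F) (hinj : Function.Injective f) (hran : IsComplete (Set.range f)) :
    ∃ K, AntilipschitzWith K f := by
  have : CompleteSpace f.range := hran.completeSpace_coe
  have hsurj : Set.range f.rangeRestrict = Set.univ :=
    Set.range_eq_univ.2 f.toLinearMap.surjective_rangeRestrict
  exact f.rangeRestrict.antilipschitz_of_injective_of_isClosed_range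
    (Set.injective_codRestrict _ |>.2 hinj) (hsurj ▸ isClosed_univ)

theorem exists_pos_forall_mem_mul_norm_le_of_isComplete_map (A : E →L[𝕜] F) {Z : Submodule 𝕜 E}
    (hZ : IsComplete (Z : Set E)) (hker : Disjoint Z (A : E →ₗ[𝕜] F).ker)
    (hmap : IsComplete (Z.map (A : E →ₗ[𝕜] F) : Set F)) :
    ∃ c > 0, ∀ z ∈ Z, c * ‖z‖ ≤ ‖A z‖ := by
  have : CompleteSpace Z := hZ.completeSpace_coe
  let f : Z →L[𝕜] F := A.domRestrict Z
  have hinj : Function.Injective f := LinearMap.injective_domRestrict_iff.2 hker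
  have hran : Set.range f = Z.map (A : E →ₗ[𝕜] F) :=
    congrArg SetLike.coe (LinearMap.range_domRestrict Z (A : E →ₗ[𝕜] F))
  obtain ⟨c, hc, hbound⟩ := antilipschitzWith_iff_exists_mul_le_norm.1
    (exists_antilipschitzWith_of_injective_of_isComplete_range f hinj (hran ▸ hmap))
  exact ⟨c, hc, fun z hz ↦ hbound ⟨z, hz⟩⟩

end BoundedBelow

section StrictlySingular

variable {X Y : Type*} [NormedAddCommGroup X] [NormedSpace ℝ X]
  [NormedAddCommGroup Y] [NormedSpace ℝ Y] {A : X →L[ℝ] Y}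

theorem StrictlySingular.finiteDimensional_of_isComplete_map (hss : StrictlySingular A)
    {Z : Submodule ℝ X} (hZ : IsComplete (Z : Set X)) (hker : Disjoint Z (A : X →ₗ[ℝ] Y).ker)
    (hmap : IsComplete (Z.map (A : X →ₗ[ℝ] Y) : Set Y)) : FiniteDimensional ℝ Z :=
  of_not_not fun hZinf ↦ hss Z hZ.isClosed hZinf
    (exists_pos_forall_mem_mul_norm_le_of_isComplete_map A hZ hker hmap)

theorem StrictlySingular.finiteDimensional_of_le_map (hss : StrictlySingular A)
    {U : Submodule ℝ X} (hU : IsComplete (U : Set X)) (hker : Disjoint U (A : X →ₗ[ℝ] Y).ker)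
    {M : Submodule ℝ Y} (hM : IsComplete (M : Set Y)) (hMU : M ≤ U.map (A : X →ₗ[ℝ] Y)) :
    FiniteDimensional ℝ M := by
  let Z : Submodule ℝ X := U ⊓ M.comap (A : X →ₗ[ℝ] Y)
  have hZ : IsComplete (Z : Set X) :=
    isComplete_inter_of_isClosed hU (hM.isClosed.preimage A.continuous)
  have hmap : Z.map (A : X →ₗ[ℝ] Y) = M := by
    rw [← Submodule.map_inf_eq_map_inf_comap, inf_eq_right.2 hMU]
  have : FiniteDimensional ℝ Z :=
    hss.finiteDimensional_of_isComplete_map hZ (hker.mono_left inf_le_left) (hmap ▸ hM)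
  exact hmap ▸ Module.Finite.map Z (A : X →ₗ[ℝ] Y)

theorem hybrid_ker_uncomplemented_general (hss : StrictlySingular A)
    {M : Submodule ℝ Y} (hM : IsComplete (M : Set Y)) (hMinf : ¬ FiniteDimensional ℝ M)
    (hMran : M ≤ (A : X →ₗ[ℝ] Y).range) :
    ¬ ∃ U : Submodule ℝ X, IsComplete (U : Set X) ∧ IsCompl (A : X →ₗ[ℝ] Y).ker U := by
  rintro ⟨U, hU, hcompl⟩
  have hmap : U.map (A : X →ₗ[ℝ] Y) = (A : X →ₗ[ℝ] Y).range :=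
    Submodule.map_eq_range_iff.2 hcompl.codisjoint.symm
  exact hMinf (hss.finiteDimensional_of_le_map hU hcompl.disjoint.symm hM (hmap ▸ hMran))

end StrictlySingular

/-- The null-space of a hybrid-type operator (strictly singular, with an
infinite-dimensional closed subspace contained in its range) between infinite-dimensional real
Banach spaces is uncomplemented in the domain. -/
theorem hybrid_ker_uncomplemented
    {X Y : Type*} [NormedAddCommGroup X] [NormedSpace ℝ X] [CompleteSpace X]
    [NormedAddCommGroup Y] [NormedSpace ℝ Y] [CompleteSpace Y]
    (hX : ¬ FiniteDimensional ℝ X) (hY : ¬ FiniteDimensional ℝ Y)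
    (A : X →L[ℝ] Y) (hss : StrictlySingular A)
    (M : Submodule ℝ Y) (hMcl : IsClosed (M : Set Y)) (hMinf : ¬ FiniteDimensional ℝ M)
    (hMran : (M : Set Y) ⊆ Set.range A) :
    ¬ ∃ U : Submodule ℝ X, IsClosed (U : Set X) ∧
      LinearMap.ker (A : X →ₗ[ℝ] Y) ⊓ U = ⊥ ∧ LinearMap.ker (A : X →ₗ[ℝ] Y) ⊔ U = ⊤ := by
  rintro ⟨U, hUcl, hinf, hsup⟩
  exact hybrid_ker_uncomplemented_general hss hMcl.isComplete hMinf hMran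
    ⟨U, hUcl.isComplete, IsCompl.of_eq hinf hsup⟩
end

section
/- Fix 1 < q < ∞ and let A_Maz : ℓ¹ → ℓ^q be a Mazur-type operator, i.e., A_Maz x = Σ_{k=1}^∞ x_k ζ⁽ᵏ⁾ for a sequence (ζ⁽ᵏ⁾)_{k∈ℕ} of pairwise distinct elements dense in the unit sphere of ℓ^q. Then A_Maz is strictly singular, A_Maz is not a compact operator, and the null-space N(A_Maz) is uncomplemented in ℓ¹: there is no closed subspace U of ℓ¹ with N(A_Maz) ∩ U = {0} and N(A_Maz) + U = ℓ¹. -/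
open scoped ENNReal

/-!
Let `Z` be an infinite-dimensional subspace of `ℓ^p` on which `A : ℓ^p → ℓ^q`, `p < q`, is bounded
below. A gliding hump produces unit vectors `z₁, z₂, … ∈ Z` such that the `zⱼ` and the `A zⱼ` are
almost disjoint. Then `‖z₁ + ⋯ + zₙ‖` grows like `n ^ (1 / p)` but `‖A (z₁ + ⋯ + zₙ)‖` at most like
`n ^ (1 / q)`, which is absurd.

A Mazur-type operator maps the unit ball of `ℓ¹` onto a set whose closure contains the unit sphere,
and successive approximation then makes it surjective. By the open mapping theorem it is not
compact, and it restricts to an isomorphism on every closed complement of its null-space, which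
strict singularity forbids.
-/

open Filter Topology
open scoped NNReal

section AsymptoticAdditivity

variable {ι : Type*} {E : ι → Type*} [∀ i, NormedAddCommGroup (E i)] {p : ℝ≥0∞}

theorem toReal_pos_of_fact_one_le [Fact (1 ≤ p)] (hp : p ≠ ∞) : 0 < p.toReal :=
  ENNReal.toReal_pos (zero_lt_one.trans_le (Fact.out : 1 ≤ p)).ne' hp

theorem lp_norm_add_rpow_of_disjoint (hp : 0 < p.toReal) {x y : lp E p}
    (h : ∀ i, x i = 0 ∨ y i = 0) :
    ‖x + y‖ ^ p.toReal = ‖x‖ ^ p.toReal + ‖y‖ ^ p.toReal := by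
  refine (lp.hasSum_norm hp (x + y)).unique ?_
  convert (lp.hasSum_norm hp x).add (lp.hasSum_norm hp y) using 2 with i
  rcases h i with h | h <;> simp [h, Real.zero_rpow hp.ne']

theorem lp_eventually_abs_norm_add_rpow_sub_lt [Fact (1 ≤ p)] (hp : p ≠ ∞) (x : lp E p) (M : ℝ)
    {ε : ℝ} (hε : 0 < ε) :
    ∀ᶠ S : Finset ι in atTop, ∀ w : lp E p, (∀ i ∈ S, w i = 0) → ‖w‖ ≤ M →
      |‖x + w‖ ^ p.toReal - (‖x‖ ^ p.toReal + ‖w‖ ^ p.toReal)| < ε := by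
  classical
  have hr := toReal_pos_of_fact_one_le hp
  have huc : UniformContinuousOn (fun a : ℝ => a ^ p.toReal) (Set.Icc 0 (‖x‖ + 1 + M)) :=
    isCompact_Icc.uniformContinuousOn_of_continuous (Real.continuous_rpow_const hr.le).continuousOn
  obtain ⟨δ, hδ, hclose⟩ := Metric.uniformContinuousOn_iff.1 huc (ε / 2) (half_pos hε)
  filter_upwards [Metric.tendsto_nhds.1 (lp.hasSum_single hp x) (min δ 1) (by positivity)]
    with S hS w hwS hwM
  -- Truncating `x` to `S` makes its support disjoint from that of `w`, and moves the norms of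
  -- `x` and `x + w` by less than `δ` whatever `w` is.
  set t := ∑ i ∈ S, lp.single p i (x i) with ht
  rw [dist_comm, dist_eq_norm, lt_min_iff] at hS
  have htx : ‖t‖ ≤ ‖x‖ + 1 := by linarith [norm_sub_norm_le t x, norm_sub_rev t x]
  have hreplace (v : lp E p) (hv : ‖v‖ ≤ M) :
      |‖x + v‖ ^ p.toReal - ‖t + v‖ ^ p.toReal| < ε / 2 := by
    refine hclose _ ⟨norm_nonneg _, ?_⟩ _ ⟨norm_nonneg _, ?_⟩ ?_
    · linarith [norm_add_le x v]
    · linarith [norm_add_le t v]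
    · calc |‖x + v‖ - ‖t + v‖| ≤ ‖x + v - (t + v)‖ := abs_norm_sub_norm_le _ _
        _ = ‖x - t‖ := by rw [add_sub_add_right_eq_sub]
        _ < δ := hS.1
  have hdisjoint : ‖t + w‖ ^ p.toReal = ‖t‖ ^ p.toReal + ‖w‖ ^ p.toReal := by
    refine lp_norm_add_rpow_of_disjoint hr fun i => ?_
    by_cases hi : i ∈ S
    · exact .inr (hwS i hi)
    · refine .inl ?_
      simp only [ht, lp.coeFn_sum, lp.coeFn_single, Finset.sum_apply,
        Finset.sum_pi_single, if_neg hi]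
  have hxw := abs_lt.1 (hreplace w hwM)
  have hx := abs_lt.1 (hreplace 0 (by simpa using (norm_nonneg w).trans hwM))
  rw [add_zero, add_zero] at hx
  rw [abs_lt]
  constructor <;> linarith

end AsymptoticAdditivity

section GlidingHump

theorem exists_mem_norm_eq_one_map_eq_zero {𝕜 X V : Type*} [RCLike 𝕜] [NormedAddCommGroup X]
    [NormedSpace 𝕜 X] [AddCommGroup V] [Module 𝕜 V] [FiniteDimensional 𝕜 V] {Z : Submodule 𝕜 X}
    (hZ : ¬ FiniteDimensional 𝕜 Z) (L : X →ₗ[𝕜] V) : ∃ z ∈ Z, ‖z‖ = 1 ∧ L z = 0 := by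
  have hL : ¬ Function.Injective (L.domRestrict Z) :=
    fun h => hZ (FiniteDimensional.of_injective _ h)
  rw [injective_iff_map_eq_zero] at hL
  push Not at hL
  obtain ⟨z, hLz, hz⟩ := hL
  refine ⟨((‖(z : X)‖ : 𝕜)⁻¹) • (z : X), Z.smul_mem _ z.2,
    norm_smul_inv_norm (by simpa using hz), ?_⟩
  rw [map_smul, show L z = 0 from hLz, smul_zero]

variable {𝕜 ι κ : Type*} [RCLike 𝕜]
  {E : ι → Type*} [∀ i, NormedAddCommGroup (E i)] [∀ i, NormedSpace 𝕜 (E i)]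
  [∀ i, FiniteDimensional 𝕜 (E i)]
  {F : κ → Type*} [∀ k, NormedAddCommGroup (F k)] [∀ k, NormedSpace 𝕜 (F k)]
  [∀ k, FiniteDimensional 𝕜 (F k)]
  {p q : ℝ≥0∞} [Fact (1 ≤ p)] [Fact (1 ≤ q)]

theorem lp_exists_mem_norm_eq_one_vanishing_on (A : lp E p →L[𝕜] lp F q)
    {Z : Submodule 𝕜 (lp E p)} (hZ : ¬ FiniteDimensional 𝕜 Z) (S : Finset ι) (T : Finset κ) :
    ∃ z ∈ Z, ‖z‖ = 1 ∧ (∀ i ∈ S, z i = 0) ∧ ∀ k ∈ T, A z k = 0 := by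
  let restrictS : lp E p →ₗ[𝕜] ∀ i : S, E i := LinearMap.pi fun i => lp.evalₗ E p (i : ι)
  let restrictT : lp F q →ₗ[𝕜] ∀ k : T, F k := LinearMap.pi fun k => lp.evalₗ F q (k : κ)
  obtain ⟨z, hzZ, hz, hLz⟩ :=
    exists_mem_norm_eq_one_map_eq_zero hZ (restrictS.prod (restrictT ∘ₗ A.toLinearMap))
  obtain ⟨hzS, hzT⟩ := Prod.ext_iff.1 hLz
  exact ⟨z, hzZ, hz, fun i hi => congrFun hzS ⟨i, hi⟩, fun k hk => congrFun hzT ⟨k, hk⟩⟩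

theorem lp_exists_mem_le_norm_rpow_and_norm_map_rpow_le (hp : p ≠ ∞) (hq : q ≠ ∞)
    (A : lp E p →L[𝕜] lp F q) {Z : Submodule 𝕜 (lp E p)} (hZ : ¬ FiniteDimensional 𝕜 Z) (n : ℕ) :
    ∃ x ∈ Z, (n / 2 : ℝ) ≤ ‖x‖ ^ p.toReal ∧ ‖A x‖ ^ q.toReal ≤ (‖A‖ ^ q.toReal + 1) * n := by
  have hq₀ := toReal_pos_of_fact_one_le hq
  induction n with
  | zero =>
    exact ⟨0, Z.zero_mem, by simp [Real.zero_rpow (toReal_pos_of_fact_one_le hp).ne'],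
      by simp [Real.zero_rpow hq₀.ne']⟩
  | succ n ih =>
    obtain ⟨x, hxZ, hx, hAx⟩ := ih
    obtain ⟨S, hS⟩ := (lp_eventually_abs_norm_add_rpow_sub_lt hp x 1 one_half_pos).exists
    obtain ⟨T, hT⟩ := (lp_eventually_abs_norm_add_rpow_sub_lt hq (A x) ‖A‖ one_pos).exists
    obtain ⟨z, hzZ, hz, hzS, hzT⟩ := lp_exists_mem_norm_eq_one_vanishing_on A hZ S T
    have hAz : ‖A z‖ ≤ ‖A‖ := by simpa [hz] using A.le_opNorm z
    have hdomain := abs_lt.1 (hS z hzS hz.le)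
    have hcodomain := abs_lt.1 (hT (A z) hzT hAz)
    have hAz_rpow : ‖A z‖ ^ q.toReal ≤ ‖A‖ ^ q.toReal :=
      Real.rpow_le_rpow (norm_nonneg _) hAz hq₀.le
    rw [hz, Real.one_rpow] at hdomain
    refine ⟨x + z, Z.add_mem hxZ hzZ, ?_, ?_⟩ <;> push_cast
    · linarith
    · rw [map_add]
      linarith

end GlidingHump

theorem lp_strictlySingular_of_lt {ι κ : Type*}
    {E : ι → Type*} [∀ i, NormedAddCommGroup (E i)] [∀ i, NormedSpace ℝ (E i)]
    [∀ i, FiniteDimensional ℝ (E i)]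
    {F : κ → Type*} [∀ k, NormedAddCommGroup (F k)] [∀ k, NormedSpace ℝ (F k)]
    [∀ k, FiniteDimensional ℝ (F k)]
    {p q : ℝ≥0∞} [Fact (1 ≤ p)] [Fact (1 ≤ q)] (hpq : p < q) (hq : q ≠ ∞)
    (A : lp E p →L[ℝ] lp F q) : StrictlySingular A := by
  rintro Z - hZ ⟨c, hc, hA⟩
  have hp := hpq.ne_top
  have hp₀ := toReal_pos_of_fact_one_le hp
  have hq₀ := toReal_pos_of_fact_one_le hq
  set s := q.toReal / p.toReal with hs
  have hs1 : 1 < s := (one_lt_div hp₀).2 ((ENNReal.toReal_lt_toReal hp hq).2 hpq)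
  set C := ‖A‖ ^ q.toReal + 1
  have hbound (n : ℕ) (hn : 0 < (n / 2 : ℝ)) : c ^ q.toReal * (n / 2 : ℝ) ^ (s - 1) ≤ C * 2 := by
    obtain ⟨x, hxZ, hx, hAx⟩ := lp_exists_mem_le_norm_rpow_and_norm_map_rpow_le hp hq A hZ n
    have hpow : c ^ q.toReal * (n / 2 : ℝ) ^ s ≤ C * n :=
      calc c ^ q.toReal * (n / 2 : ℝ) ^ s
          ≤ c ^ q.toReal * (‖x‖ ^ p.toReal) ^ s := by gcongr
        _ = (c * ‖x‖) ^ q.toReal := by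
          rw [← Real.rpow_mul (norm_nonneg _), hs, mul_div_cancel₀ _ hp₀.ne',
            Real.mul_rpow hc.le (norm_nonneg _)]
        _ ≤ ‖A x‖ ^ q.toReal := Real.rpow_le_rpow (by positivity) (hA x hxZ) hq₀.le
        _ ≤ C * n := hAx
    rw [Real.rpow_sub_one hn.ne', ← mul_div_assoc, div_le_iff₀ hn]
    linarith
  have hhalf : Tendsto (fun n : ℕ => (n / 2 : ℝ)) atTop atTop :=
    tendsto_natCast_atTop_atTop.atTop_div_const two_pos
  have hlim : Tendsto (fun n : ℕ => c ^ q.toReal * (n / 2 : ℝ) ^ (s - 1)) atTop atTop :=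
    ((tendsto_rpow_atTop (sub_pos.2 hs1)).comp hhalf).const_mul_atTop (by positivity)
  obtain ⟨n, hn, hn₀⟩ :=
    ((hlim.eventually_gt_atTop (C * 2)).and (hhalf.eventually_gt_atTop 0)).exists
  exact (hbound n hn₀).not_gt hn

theorem lp_not_finiteDimensional (𝕜 : Type*) {κ : Type*} [NormedField 𝕜] [Infinite κ]
    (F : κ → Type*) [∀ k, NormedAddCommGroup (F k)] [∀ k, NormedSpace 𝕜 (F k)]
    [∀ k, Nontrivial (F k)] (p : ℝ≥0∞) : ¬ FiniteDimensional 𝕜 (lp F p) := by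
  classical
  intro _
  choose e he using fun k => exists_ne (0 : F k)
  have hind : LinearIndependent 𝕜 fun k => lp.single p k (e k) := by
    refine linearIndependent_iff'.2 fun S a hsum k hk => ?_
    have hcoord : (∑ j ∈ S, a j • lp.single p j (e j) : lp F p) k = 0 := by rw [hsum]; rfl
    simp only [← lp.single_smul, lp.coeFn_sum, lp.coeFn_single, Finset.sum_apply,
      Finset.sum_pi_single, if_pos hk] at hcoord
    exact (smul_eq_zero.1 hcoord).resolve_right (he k)
  exact Module.Finite.not_linearIndependent_of_infinite _ hind

section Surjectivity

theorem surjective_of_exists_approx_preimage {X Y 𝓕 : Type*}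
    [NormedAddCommGroup X] [CompleteSpace X] [NormedAddCommGroup Y] [FunLike 𝓕 X Y]
    [AddMonoidHomClass 𝓕 X Y] {f : 𝓕} (hf : Continuous f) {r C : ℝ} (hr₀ : 0 ≤ r) (hr₁ : r < 1)
    (h : ∀ y, ∃ x, ‖y - f x‖ ≤ r * ‖y‖ ∧ ‖x‖ ≤ C * ‖y‖) : Function.Surjective f := by
  choose g hg hgnorm using h
  intro y
  let residual (n : ℕ) : Y := (fun y => y - f (g y))^[n] y
  have hresidual_succ (n : ℕ) : residual (n + 1) = residual n - f (g (residual n)) :=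
    Function.iterate_succ_apply' _ _ _
  have hgeom (n : ℕ) : ‖residual n‖ ≤ r ^ n * ‖y‖ := by
    induction n with
    | zero => simp [residual]
    | succ n ih =>
      calc ‖residual (n + 1)‖ ≤ r * ‖residual n‖ := hresidual_succ n ▸ hg _
        _ ≤ r * (r ^ n * ‖y‖) := by gcongr
        _ = r ^ (n + 1) * ‖y‖ := by ring
  have hsummable_residual : Summable fun n => ‖residual n‖ :=
    .of_nonneg_of_le (fun _ => norm_nonneg _) hgeom
      ((summable_geometric_of_lt_one hr₀ hr₁).mul_right ‖y‖)
  have hsummable : Summable fun n => g (residual n) :=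
    .of_norm_bounded (hsummable_residual.mul_left C) fun _ => hgnorm _
  have hpartial (n : ℕ) : f (∑ i ∈ Finset.range n, g (residual i)) = y - residual n := by
    induction n with
    | zero => simp [residual]
    | succ n ih =>
      rw [Finset.sum_range_succ, map_add, ih, hresidual_succ]
      abel
  have hresidual : Tendsto residual atTop (𝓝 0) :=
    tendsto_zero_iff_norm_tendsto_zero.2 hsummable_residual.tendsto_atTop_zero
  refine ⟨∑' n, g (residual n), tendsto_nhds_unique
    ((hf.tendsto _).comp hsummable.hasSum.tendsto_sum_nat) ?_⟩
  simpa [Function.comp_def, hpartial] using hresidual.const_sub y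

theorem surjective_of_sphere_subset_closure_image_closedBall {𝕜 X Y : Type*} [RCLike 𝕜]
    [NormedAddCommGroup X] [NormedSpace 𝕜 X] [CompleteSpace X]
    [NormedAddCommGroup Y] [NormedSpace 𝕜 Y] {A : X →L[𝕜] Y} {C : ℝ}
    (h : Metric.sphere 0 1 ⊆ closure (A '' Metric.closedBall 0 C)) : Function.Surjective A := by
  refine surjective_of_exists_approx_preimage (C := C) A.continuous one_half_pos.le
    one_half_lt_one fun y => ?_
  rcases eq_or_ne y 0 with rfl | hy
  · exact ⟨0, by simp⟩
  have hy' : (‖y‖ : 𝕜) ≠ 0 := by simpa using hy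
  obtain ⟨_, ⟨x, hx, rfl⟩, hdist⟩ := Metric.mem_closure_iff.1
    (h (mem_sphere_zero_iff_norm.2 (norm_smul_inv_norm (𝕜 := 𝕜) hy))) (1 / 2) one_half_pos
  rw [dist_eq_norm] at hdist
  refine ⟨(‖y‖ : 𝕜) • x, ?_, ?_⟩
  · calc ‖y - A ((‖y‖ : 𝕜) • x)‖ = ‖(‖y‖ : 𝕜) • ((‖y‖ : 𝕜)⁻¹ • y - A x)‖ := by
          rw [smul_sub, smul_inv_smul₀ hy', map_smul]
      _ = ‖y‖ * ‖(‖y‖ : 𝕜)⁻¹ • y - A x‖ := by rw [norm_smul, RCLike.norm_coe_norm]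
      _ ≤ ‖y‖ * (1 / 2) := by gcongr
      _ = 1 / 2 * ‖y‖ := mul_comm _ _
  · calc ‖(‖y‖ : 𝕜) • x‖ = ‖y‖ * ‖x‖ := by rw [norm_smul, RCLike.norm_coe_norm]
      _ ≤ ‖y‖ * C := by gcongr; exact mem_closedBall_zero_iff.1 hx
      _ = C * ‖y‖ := mul_comm _ _

end Surjectivity

theorem finiteDimensional_of_surjective_of_isCompact_closure_image_closedBall {𝕜 X Y : Type*}
    [NontriviallyNormedField 𝕜] [CompleteSpace 𝕜]
    [NormedAddCommGroup X] [NormedSpace 𝕜 X] [CompleteSpace X]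
    [NormedAddCommGroup Y] [NormedSpace 𝕜 Y] [CompleteSpace Y] {A : X →L[𝕜] Y}
    (hsurj : Function.Surjective A) {r : ℝ} (hr : 0 < r)
    (hA : IsCompact (closure (A '' Metric.closedBall 0 r))) : FiniteDimensional 𝕜 Y := by
  have hnhds : A '' Metric.closedBall 0 r ∈ 𝓝 (0 : Y) := by
    simpa using (A.isOpenMap hsurj).image_mem_nhds (Metric.closedBall_mem_nhds (0 : X) hr)
  exact .of_totallyBounded_nhds_zero 𝕜 hnhds (hA.totallyBounded.subset subset_closure)

namespace StrictlySingular

variable {X Y : Type*} [NormedAddCommGroup X] [NormedSpace ℝ X] [NormedAddCommGroup Y]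
  [NormedSpace ℝ Y] {A : X →L[ℝ] Y}

theorem finiteDimensional_of_antilipschitzWith_comp_subtypeL (hA : StrictlySingular A)
    {U : Submodule ℝ X} (hU : IsClosed (U : Set X)) {K : ℝ≥0}
    (hK : AntilipschitzWith K (A ∘L U.subtypeL)) : FiniteDimensional ℝ U := by
  by_contra hdim
  refine hA U hU hdim ⟨((K : ℝ) + 1)⁻¹, by positivity, fun z hz => ?_⟩
  rw [inv_mul_le_iff₀ (by positivity)]
  calc ‖z‖ ≤ K * ‖A z‖ := (A ∘L U.subtypeL).bound_of_antilipschitz hK ⟨z, hz⟩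
    _ ≤ (K + 1) * ‖A z‖ := by gcongr; exact le_add_of_nonneg_right zero_le_one

theorem finiteDimensional_range_of_isCompl_ker [CompleteSpace X] [CompleteSpace Y]
    (hA : StrictlySingular A) (hrange : IsClosed (Set.range A)) {U : Submodule ℝ X}
    (hU : IsClosed (U : Set X)) (hcompl : IsCompl (LinearMap.ker A.toLinearMap) U) :
    FiniteDimensional ℝ (LinearMap.range A.toLinearMap) := by
  have : CompleteSpace U := hU.completeSpace_coe
  let e : U ≃ₗ[ℝ] LinearMap.range A.toLinearMap :=
    A.toLinearMap.kerComplementEquivRange hcompl.symm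
  have hinj : Function.Injective (A ∘L U.subtypeL) := Subtype.val_injective.comp e.injective
  have hrangeU : Set.range (A ∘L U.subtypeL) = Set.range A :=
    calc Set.range (A ∘L U.subtypeL) = Set.range (Subtype.val ∘ e) := rfl
      _ = Set.range A := by
        rw [e.surjective.range_comp, Subtype.range_coe, LinearMap.coe_range,
          ContinuousLinearMap.coe_coe]
  obtain ⟨K, hK⟩ := (A ∘L U.subtypeL).antilipschitz_of_injective_of_isClosed_range hinj
    (hrangeU ▸ hrange)
  have := hA.finiteDimensional_of_antilipschitzWith_comp_subtypeL hU hK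
  exact e.finiteDimensional

end StrictlySingular

theorem mazur_operator_strictlySingular_not_compact_ker_uncomplemented_general
    {ι κ : Type*} [Infinite κ] {F : κ → Type*} [∀ k, NormedAddCommGroup (F k)]
    [∀ k, NormedSpace ℝ (F k)] [∀ k, FiniteDimensional ℝ (F k)] [∀ k, Nontrivial (F k)]
    {q : ℝ≥0∞} [Fact (1 ≤ q)] (hq1 : 1 < q) (hq2 : q < ∞) {ζ : ι → lp F q}
    (hdense : Metric.sphere (0 : lp F q) 1 ⊆ closure (Set.range ζ))
    {A : lp (fun _ : ι => ℝ) 1 →L[ℝ] lp F q}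
    (hA : ∀ x : lp (fun _ : ι => ℝ) 1, A x = ∑' k, x k • ζ k) :
    StrictlySingular A ∧
      ¬ IsCompact (closure (A '' Metric.closedBall 0 1)) ∧
      ¬ ∃ U : Submodule ℝ (lp (fun _ : ι => ℝ) 1), IsClosed (U : Set (lp (fun _ : ι => ℝ) 1)) ∧
        LinearMap.ker A.toLinearMap ⊓ U = ⊥ ∧ LinearMap.ker A.toLinearMap ⊔ U = ⊤ := by
  classical
  have (k : κ) : CompleteSpace (F k) := FiniteDimensional.complete ℝ (F k)
  have hsing : StrictlySingular A := lp_strictlySingular_of_lt hq1 hq2.ne A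
  have hsingle (k : ι) : A (lp.single 1 k 1) = ζ k := by
    rw [hA, tsum_eq_single k fun j hj => by simp [hj]]
    simp
  have hball : Set.range ζ ⊆ A '' Metric.closedBall 0 1 := by
    rintro _ ⟨k, rfl⟩
    exact ⟨lp.single 1 k 1, by simp, hsingle k⟩
  have hsurj : Function.Surjective A :=
    surjective_of_sphere_subset_closure_image_closedBall (hdense.trans (closure_mono hball))
  have hdim : ¬ FiniteDimensional ℝ (lp F q) := lp_not_finiteDimensional ℝ F q
  refine ⟨hsing, fun hcompact => hdim ?_, fun ⟨U, hU, hinf, hsup⟩ => hdim ?_⟩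
  · exact finiteDimensional_of_surjective_of_isCompact_closure_image_closedBall hsurj one_pos
      hcompact
  · have hfin := hsing.finiteDimensional_range_of_isCompl_ker
      (by simp [hsurj.range_eq]) hU (IsCompl.of_eq hinf hsup)
    rw [LinearMap.range_eq_top.2 hsurj] at hfin
    exact Submodule.topEquiv.finiteDimensional

/-- A Mazur-type operator `A : ℓ¹ → ℓ^q` (`1 < q < ∞`), given by
`A x = ∑' k, x k • ζ k` for a sequence `(ζ k)` of pairwise distinct unit vectors dense in the
unit sphere of `ℓ^q`, is strictly singular, not compact, and its null-space is uncomplemented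
in `ℓ¹`. -/
theorem mazur_operator_strictlySingular_not_compact_ker_uncomplemented
    (q : ℝ≥0∞) [Fact (1 ≤ q)] (hq1 : 1 < q) (hq2 : q < ∞)
    (ζ : ℕ → lp (fun _ : ℕ => ℝ) q) (hdist : Function.Injective ζ)
    (hunit : ∀ k, ‖ζ k‖ = 1)
    (hdense : Metric.sphere (0 : lp (fun _ : ℕ => ℝ) q) 1 ⊆ closure (Set.range ζ))
    (A : lp (fun _ : ℕ => ℝ) 1 →L[ℝ] lp (fun _ : ℕ => ℝ) q)
    (hA : ∀ x : lp (fun _ : ℕ => ℝ) 1, A x = ∑' k, x k • ζ k) :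
    StrictlySingular A ∧
      ¬ IsCompact (closure (A '' Metric.closedBall 0 1)) ∧
      ¬ ∃ U : Submodule ℝ (lp (fun _ : ℕ => ℝ) 1), IsClosed (U : Set (lp (fun _ : ℕ => ℝ) 1)) ∧
        LinearMap.ker A.toLinearMap ⊓ U = ⊥ ∧ LinearMap.ker A.toLinearMap ⊔ U = ⊤ :=
  mazur_operator_strictlySingular_not_compact_ker_uncomplemented_general hq1 hq2 hdense hA
end

section
/- Let Y be an infinite-dimensional real Banach space and let A : ℓ¹ → Y be a bounded linear operator whose range R(A) is infinite-dimensional. If A is weak*-to-weak sequentially continuous, then R(A) does not contain any infinite-dimensional closed linear subspace of Y; in particular, R(A) is not closed, and the equation A x = y is ill-posed of type II. -/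
open Filter

/-- A sequence in `ℓ¹` converges weak* (w.r.t. the predual `c₀`) to `x₀` if all dual pairings
with null sequences converge. -/
def WeakStarConvLp1 (x : ℕ → lp (fun _ : ℕ => ℝ) 1) (x₀ : lp (fun _ : ℕ => ℝ) 1) : Prop :=
  ∀ c : ℕ → ℝ, Tendsto c atTop (nhds 0) →
    Tendsto (fun n => ∑' k, c k * x n k) atTop (nhds (∑' k, c k * x₀ k))

/-- A bounded linear operator `A : ℓ¹ → Y` is weak*-to-weak sequentially continuous if it maps
weak*-convergent sequences to weakly convergent sequences. -/
def WeakStarToWeakSeqContinuous {Y : Type*} [NormedAddCommGroup Y] [NormedSpace ℝ Y]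
    (A : lp (fun _ : ℕ => ℝ) 1 →L[ℝ] Y) : Prop :=
  ∀ (x : ℕ → lp (fun _ : ℕ => ℝ) 1) (x₀ : lp (fun _ : ℕ => ℝ) 1), WeakStarConvLp1 x x₀ →
    ∀ f : Y →L[ℝ] ℝ, Tendsto (fun n => f (A (x n))) atTop (nhds (f (A x₀)))

/-!
Suppose `M ⊆ R(A)` is closed and infinite-dimensional. Elements of `M` lift to `ℓ¹` with norm
control (open mapping), and bounded sequences in `ℓ¹` have weak* convergent subsequences, so bounded
sequences in `M` have weakly convergent ones, and `M` contains a weakly null sequence `v` with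
`‖v n‖ ≥ 1`. On the dual side, `A*` maps `Y*` into `c₀`. From norming functionals of `v` one gets
bounded `g n` with `|g n (w n)| ≥ 1/2` along a subsequence `w` of `v`, such that `A* (g n)` is
pointwise null. A gliding hump then makes the sequences `A* (g n) ∈ c₀` almost disjoint, so
that `∑ |g n y| < ∞` for every `y ∈ M`. Thus `y ↦ (g n y)` is an operator from `M` into `ℓ¹`; as in
Schur's theorem it cannot keep the weakly null `w n` away from zero: `g n (w n) → 0`.
-/

open scoped Topology

section Subsequences

theorem exists_strictMono_forall_lt_of_eventually {R : ℕ → ℕ → ℕ → Prop}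
    (hR : ∀ l p, ∀ᶠ q in atTop, R l p q) :
    ∃ n : ℕ → ℕ, StrictMono n ∧ ∀ i j, i < j → R j (n i) (n j) := by
  have hnext : ∀ l m, ∃ q, m < q ∧ ∀ p ≤ m, R l p q := fun l m =>
    ((eventually_gt_atTop m).and
      ((eventually_all_finite (Set.finite_Iic m)).2 fun p _ => hR l p)).exists
  choose next hlt hnext using hnext
  let n : ℕ → ℕ := Nat.rec 0 fun j m => next (j + 1) m
  have hn : StrictMono n := strictMono_nat_of_lt_succ fun j => hlt _ _
  refine ⟨n, hn, fun i j hij => ?_⟩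
  obtain ⟨j, rfl⟩ := Nat.exists_eq_succ_of_ne_zero hij.ne_bot
  exact hnext (j + 1) (n j) (n i) (hn.monotone (Nat.le_of_lt_succ hij))

variable {F : Type*} [SeminormedAddCommGroup F]

theorem eventually_norm_le_of_tendsto_zero {ι : Type*} {l : Filter ι} {u : ι → F}
    (hu : Tendsto u l (𝓝 0)) {ε : ℝ} (hε : 0 < ε) : ∀ᶠ i in l, ‖u i‖ ≤ ε :=
  hu.norm.eventually_le_const (by simpa using hε)

theorem exists_subseq_norm_offDiag_le {b : ℕ → ℕ → F} (hrow : ∀ p, Tendsto (b p) atTop (𝓝 0))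
    (hcol : ∀ q, Tendsto (fun p => b p q) atTop (𝓝 0)) {ε : ℕ → ℝ} (hε : ∀ i, 0 < ε i)
    (hanti : Antitone ε) :
    ∃ n : ℕ → ℕ, StrictMono n ∧ ∀ p q, p ≠ q → ‖b (n p) (n q)‖ ≤ ε p := by
  obtain ⟨n, hn, hsmall⟩ := exists_strictMono_forall_lt_of_eventually
    (R := fun l p q => ‖b p q‖ ≤ ε l ∧ ‖b q p‖ ≤ ε l) fun l p =>
      (eventually_norm_le_of_tendsto_zero (hrow p) (hε l)).and
        (eventually_norm_le_of_tendsto_zero (hcol p) (hε l))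
  refine ⟨n, hn, fun p q hpq => ?_⟩
  rcases hpq.lt_or_gt with hlt | hlt
  · exact (hsmall p q hlt).1.trans (hanti hlt.le)
  · exact (hsmall q p hlt).2

theorem sum_le_add_two_of_pairwise_le_half_pow {c : ℕ → ℝ} {C : ℝ} (hC : 0 ≤ C) (hc : ∀ j, c j ≤ C)
    (hpair : Pairwise fun i j => c i ≤ (1 / 2) ^ i ∨ c j ≤ (1 / 2) ^ j) (s : Finset ℕ) :
    ∑ j ∈ s, c j ≤ C + 2 := by
  obtain ⟨i, hi⟩ : ∃ i, ∀ j ≠ i, c j ≤ (1 / 2) ^ j := by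
    by_cases h : ∃ i, (1 / 2) ^ i < c i
    · obtain ⟨i, hi⟩ := h
      exact ⟨i, fun j hj => (hpair hj).resolve_right hi.not_ge⟩
    · push Not at h
      exact ⟨0, fun j _ => h j⟩
  have hle : ∀ j, c j ≤ (if j = i then C else 0) + (1 / 2) ^ j := fun j => by
    split_ifs with hj
    · exact (hc j).trans (le_add_of_nonneg_right (by positivity))
    · simpa using hi j hj
  have hgeom : ∑ j ∈ s, ((1 : ℝ) / 2) ^ j ≤ 2 :=
    sum_le_hasSum s (fun _ _ => by positivity) hasSum_geometric_two
  calc ∑ j ∈ s, c j ≤ ∑ j ∈ s, ((if j = i then C else 0) + (1 / 2) ^ j) :=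
        Finset.sum_le_sum fun j _ => hle j
    _ = (if i ∈ s then C else 0) + ∑ j ∈ s, (1 / 2) ^ j := by
        rw [Finset.sum_add_distrib, Finset.sum_ite_eq']
    _ ≤ C + 2 := add_le_add (by split_ifs <;> simp [hC]) hgeom

/-- Gliding hump: a new row is small where the earlier rows are large, so that at each `k` at most
one of the selected rows is not small. -/
theorem exists_subseq_sum_norm_le {ι : Type*} {a : ℕ → ι → F} {C : ℝ} (hC : ∀ p k, ‖a p k‖ ≤ C)
    (hrow : ∀ p, Tendsto (a p) cofinite (𝓝 0))
    (hcol : ∀ k, Tendsto (fun p => a p k) atTop (𝓝 0)) :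
    ∃ n : ℕ → ℕ, StrictMono n ∧ ∀ k (s : Finset ℕ), ∑ j ∈ s, ‖a (n j) k‖ ≤ C + 2 := by
  have hsmall : ∀ l p, ∀ᶠ q in atTop,
      ∀ k, ‖a p k‖ ≤ (1 / 2) ^ l ∨ ‖a q k‖ ≤ (1 / 2) ^ l := fun l p => by
    have hfin : {k | ¬ ‖a p k‖ ≤ (1 / 2) ^ l}.Finite :=
      eventually_norm_le_of_tendsto_zero (hrow p) (by positivity)
    filter_upwards [(eventually_all_finite hfin).2 fun k _ =>
      eventually_norm_le_of_tendsto_zero (hcol k) (ε := (1 / 2) ^ l) (by positivity)] with q hq k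
    exact or_iff_not_imp_left.2 (hq k)
  obtain ⟨n, hn, hdisj⟩ := exists_strictMono_forall_lt_of_eventually hsmall
  refine ⟨n, hn, fun k s => ?_⟩
  have hlt : ∀ i j, i < j → ‖a (n i) k‖ ≤ (1 / 2) ^ i ∨ ‖a (n j) k‖ ≤ (1 / 2) ^ j :=
    fun i j hij => (hdisj i j hij k).imp_left fun h =>
      h.trans (pow_le_pow_of_le_one (by norm_num) (by norm_num) hij.le)
  exact sum_le_add_two_of_pairwise_le_half_pow ((norm_nonneg _).trans (hC 0 k)) (fun j => hC _ k)
    (fun i j hij => hij.lt_or_gt.elim (hlt i j) fun hji => (hlt j i hji).symm) s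

end Subsequences

section WeaklyNull

variable {𝕜 E : Type*} [NontriviallyNormedField 𝕜] [NormedAddCommGroup E] [NormedSpace 𝕜 E]

theorem exists_continuousLinearMap_hasSum [CompleteSpace E] {ι F : Type*} [Countable ι]
    [NormedAddCommGroup F] [NormedSpace 𝕜 F] {g : ι → E →L[𝕜] F}
    (hg : ∀ y, Summable fun n => g n y) :
    ∃ f : E →L[𝕜] F, ∀ y, HasSum (fun n => g n y) (f y) :=
  ⟨continuousLinearMapOfTendsto (l := atTop) (fun s : Finset ι => ∑ n ∈ s, g n)
    (f := fun y => ∑' n, g n y) (tendsto_pi_nhds.2 fun y => by simpa [HasSum] using (hg y).hasSum),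
    fun y => (hg y).hasSum⟩

variable [CompleteSpace 𝕜]

/-- The operator `y ↦ (g n y)` into `ℓ¹` sends `v` to a weakly null sequence. Were the diagonal
entries `g n (v n)` bounded below, then along a subsequence they would dominate the off-diagonal
ones, and the functional `∑ g n` would be bounded below on `v`. -/
theorem tendsto_apply_zero_of_summable_norm_of_weaklyNull [CompleteSpace E] {g : ℕ → E →L[𝕜] 𝕜}
    (hg : ∀ y, Summable fun n => ‖g n y‖) {v : ℕ → E}
    (hv : ∀ f : E →L[𝕜] 𝕜, Tendsto (fun n => f (v n)) atTop (𝓝 0)) :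
    Tendsto (fun n => g n (v n)) atTop (𝓝 0) := by
  by_contra hdiag
  obtain ⟨δ, hδ, hfreq⟩ : ∃ δ > 0, ∃ᶠ n in atTop, δ ≤ ‖g n (v n)‖ := by
    simpa [Metric.tendsto_nhds, frequently_atTop] using hdiag
  obtain ⟨φ, hφ, hlarge⟩ := extraction_of_frequently_atTop hfreq
  obtain ⟨n, hn, hoff⟩ := exists_subseq_norm_offDiag_le
    (b := fun p q => g (φ p) (v (φ q))) (ε := fun i => δ / 4 * (1 / 2) ^ i)
    (fun p => (hv _).comp hφ.tendsto_atTop)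
    (fun q => (hg _).of_norm.tendsto_atTop_zero.comp hφ.tendsto_atTop) (fun i => by positivity)
    (fun i j hij => mul_le_mul_of_nonneg_left
      (pow_le_pow_of_le_one (by norm_num) (by norm_num) hij) (by positivity))
  obtain ⟨f, hf⟩ := exists_continuousLinearMap_hasSum (g := fun j => g (φ (n j))) fun y =>
    (hg y).of_norm.comp_injective (hφ.comp hn).injective
  have hlower : ∀ i, δ / 2 ≤ ‖f (v (φ (n i)))‖ := fun i => by
    set y := v (φ (n i))
    have htail : ‖f y - g (φ (n i)) y‖ ≤ δ / 4 * 2 :=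
      ((hf y).sub (hasSum_ite_eq i (g (φ (n i)) y))).norm_le_of_bounded
        (hasSum_geometric_two.mul_left (δ / 4)) fun j => by
          split_ifs with hj
          · rw [hj, sub_self, norm_zero]
            positivity
          · simpa only [sub_zero] using hoff j i hj
    linarith [hlarge (n i), norm_sub_norm_le (g (φ (n i)) y) (f y),
      norm_sub_rev (f y) (g (φ (n i)) y)]
  have hnull : Tendsto (fun i => ‖f (v (φ (n i)))‖) atTop (𝓝 0) :=
    tendsto_zero_iff_norm_tendsto_zero.1 ((hv f).comp (hφ.comp hn).tendsto_atTop)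
  linarith [ge_of_tendsto' hnull hlower]

theorem exists_weaklyNull_one_le_norm (hE : ¬ FiniteDimensional 𝕜 E)
    (hconv : ∀ (y : ℕ → E) (R : ℝ), (∀ n, ‖y n‖ ≤ R) →
      ∃ φ : ℕ → ℕ, StrictMono φ ∧
        ∀ f : E →L[𝕜] 𝕜, ∃ l, Tendsto (fun n => f (y (φ n))) atTop (𝓝 l)) :
    ∃ v : ℕ → E, (∀ n, 1 ≤ ‖v n‖) ∧
      ∀ f : E →L[𝕜] 𝕜, Tendsto (fun n => f (v n)) atTop (𝓝 0) := by
  obtain ⟨R, y, -, hyR, hsep⟩ := exists_seq_norm_le_one_le_norm_sub hE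
  obtain ⟨φ, hφ, hlim⟩ := hconv y R hyR
  refine ⟨fun n => y (φ (n + 1)) - y (φ n), fun n => hsep (hφ n.lt_succ_self).ne', fun f => ?_⟩
  obtain ⟨l, hl⟩ := hlim f
  simpa using (hl.comp (tendsto_add_atTop_nat 1)).sub hl

end WeaklyNull

section NormedSpaces

variable {𝕜 X Y : Type*} [NormedAddCommGroup X] [NormedAddCommGroup Y]

theorem exists_preimage_norm_le_of_subset_range [NontriviallyNormedField 𝕜] [NormedSpace 𝕜 X]
    [NormedSpace 𝕜 Y] [CompleteSpace X] (A : X →L[𝕜] Y) (M : Submodule 𝕜 Y)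
    (hM : IsComplete (M : Set Y)) (hMA : (M : Set Y) ⊆ Set.range A) :
    ∃ C > 0, ∀ y ∈ M, ∃ x, A x = y ∧ ‖x‖ ≤ C * ‖y‖ := by
  let N : Submodule 𝕜 X := M.comap A.toLinearMap
  have : CompleteSpace M := hM.completeSpace_coe
  have : CompleteSpace N := (hM.isClosed.preimage A.continuous).completeSpace_coe
  let B : N →L[𝕜] M := (A.comp N.subtypeL).codRestrict M fun x => x.2
  have hB : Function.Surjective B := by
    rintro ⟨y, hy⟩
    obtain ⟨x, rfl⟩ := hMA hy
    exact ⟨⟨x, hy⟩, rfl⟩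
  obtain ⟨C, hC, hlift⟩ := B.exists_preimage_norm_le hB
  refine ⟨C, hC, fun y hy => ?_⟩
  obtain ⟨x, hx, hxC⟩ := hlift ⟨y, hy⟩
  exact ⟨x, congrArg Subtype.val hx, hxC⟩

variable [RCLike 𝕜] [NormedSpace 𝕜 X] [NormedSpace 𝕜 Y] [TopologicalSpace.SeparableSpace X]

theorem exists_subseq_apply_tendsto {f : ℕ → X →L[𝕜] 𝕜} {C : ℝ} (hf : ∀ n, ‖f n‖ ≤ C) :
    ∃ φ : ℕ → ℕ, StrictMono φ ∧ ∀ x, ∃ l, Tendsto (fun n => f (φ n) x) atTop (𝓝 l) := by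
  obtain ⟨l, -, φ, hφ, hl⟩ := WeakDual.isSeqCompact_closedBall 𝕜 X 0 C
    (x := fun n => StrongDual.toWeakDual (f n)) fun n => by simpa using hf n
  exact ⟨φ, hφ, fun x => ⟨l x, ((WeakDual.eval_continuous x).tendsto l).comp hl⟩⟩

/-- The `g n` are differences `f q - f p` of norming functionals along a pointwise convergent
subsequence, with `q` so large that `f p (v q)` is small. -/
theorem exists_pointwiseNull_norming_of_weaklyNull (A : X →L[𝕜] Y) {v : ℕ → Y} (hv : ∀ n, 1 ≤ ‖v n‖)
    (hnull : ∀ f : Y →L[𝕜] 𝕜, Tendsto (fun n => f (v n)) atTop (𝓝 0)) :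
    ∃ (g : ℕ → Y →L[𝕜] 𝕜) (r : ℕ → ℕ), Tendsto r atTop atTop ∧ (∀ n, ‖g n‖ ≤ 2) ∧
      (∀ n, 1 / 2 ≤ ‖g n (v (r n))‖) ∧ ∀ x, Tendsto (fun n => g n (A x)) atTop (𝓝 0) := by
  choose f hf hfv using fun n => exists_dual_vector'' 𝕜 (v n)
  have hfA : ∀ n, ‖(f n).comp A‖ ≤ ‖A‖ := fun n =>
    ((f n).opNorm_comp_le A).trans (mul_le_of_le_one_left (norm_nonneg _) (hf n))
  obtain ⟨φ, hφ, hlim⟩ := exists_subseq_apply_tendsto hfA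
  have hq : ∀ p, ∃ q, p < q ∧ ‖f (φ p) (v (φ q))‖ ≤ 1 / 2 := fun p =>
    ((eventually_gt_atTop p).and
      (eventually_norm_le_of_tendsto_zero ((hnull (f (φ p))).comp hφ.tendsto_atTop)
        (by norm_num))).exists
  choose q hpq hq using hq
  have hq_tendsto : Tendsto q atTop atTop := tendsto_atTop_mono (fun p => (hpq p).le) tendsto_id
  refine ⟨fun p => f (φ (q p)) - f (φ p), fun p => φ (q p), hφ.tendsto_atTop.comp hq_tendsto,
    fun p => ?_, fun p => ?_, fun x => ?_⟩
  · linarith [norm_sub_le (f (φ (q p))) (f (φ p)), hf (φ (q p)), hf (φ p)]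
  · have hnorming : ‖f (φ (q p)) (v (φ (q p)))‖ = ‖v (φ (q p))‖ := by simp [hfv]
    rw [sub_apply]
    linarith [norm_sub_norm_le (f (φ (q p)) (v (φ (q p)))) (f (φ p) (v (φ (q p)))), hq p,
      hv (φ (q p))]
  · obtain ⟨l, hl⟩ := hlim x
    simpa using (hl.comp hq_tendsto).sub hl

end NormedSpaces

section LpSpaces

theorem separableSpace_lp {ι : Type*} [Countable ι] {E : ι → Type*}
    [∀ i, NormedAddCommGroup (E i)] [∀ i, TopologicalSpace.SeparableSpace (E i)]
    {p : ENNReal} [Fact (1 ≤ p)] (hp : p ≠ ⊤) : TopologicalSpace.SeparableSpace (lp E p) := by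
  classical
  have hsep : TopologicalSpace.IsSeparable
      (⋃ i, Set.range (lp.single p i : E i → lp E p)) :=
    .iUnion fun i => TopologicalSpace.isSeparable_range (lp.isometry_single i).continuous
  refine TopologicalSpace.isSeparable_univ_iff.1 ((hsep.span (R := ℤ)).closure.mono fun x _ => ?_)
  refine mem_closure_of_tendsto (lp.hasSum_single hp x) (.of_forall fun s => ?_)
  exact Submodule.sum_mem _ fun i _ =>
    Submodule.subset_span (Set.mem_iUnion.2 ⟨i, Set.mem_range_self _⟩)

variable {𝕜 ι F : Type*} [NontriviallyNormedField 𝕜] [NormedAddCommGroup F] [NormedSpace 𝕜 F]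

theorem hasSum_norm_lp_one {E : ι → Type*} [∀ i, NormedAddCommGroup (E i)] (x : lp E 1) :
    HasSum (fun k => ‖x k‖) ‖x‖ := by
  simpa using lp.hasSum_norm (p := 1) (by simp) x

theorem norm_apply_le_of_norm_apply_single_le [DecidableEq ι] (T : lp (fun _ : ι => 𝕜) 1 →L[𝕜] F)
    {C : ℝ} (hT : ∀ k, ‖T (lp.single 1 k 1)‖ ≤ C) (x : lp (fun _ : ι => 𝕜) 1) :
    ‖T x‖ ≤ C * ‖x‖ := by
  refine ((lp.hasSum_single (by simp) x).mapL T).norm_le_of_bounded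
    ((hasSum_norm_lp_one x).mul_left C) fun k => ?_
  have hsingle : lp.single 1 k (x k) = x k • lp.single (E := fun _ : ι => 𝕜) 1 k 1 := by
    rw [← lp.single_smul, smul_eq_mul, mul_one]
  rw [hsingle, map_smul, norm_smul, mul_comm]
  exact mul_le_mul_of_nonneg_right (hT k) (norm_nonneg _)

theorem sum_norm_apply_le_of_sum_norm_apply_single_le [DecidableEq ι] {κ : Type*}
    {T : κ → lp (fun _ : ι => 𝕜) 1 →L[𝕜] F} {s : Finset κ} {C : ℝ}
    (hT : ∀ k, ∑ j ∈ s, ‖T j (lp.single 1 k 1)‖ ≤ C) (x : lp (fun _ : ι => 𝕜) 1) :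
    ∑ j ∈ s, ‖T j x‖ ≤ C * ‖x‖ := by
  let S : lp (fun _ : ι => 𝕜) 1 →L[𝕜] PiLp 1 fun _ : s => F :=
    (PiLp.continuousLinearEquiv 1 𝕜 fun _ : s => F).symm.toContinuousLinearMap.comp
      (ContinuousLinearMap.pi fun j : s => T j)
  have hS : ∀ z, ‖S z‖ = ∑ j ∈ s, ‖T j z‖ := fun z => by
    rw [PiLp.norm_eq_of_L1, ← Finset.sum_coe_sort s]
    rfl
  simpa only [hS] using norm_apply_le_of_norm_apply_single_le S (by simpa only [hS] using hT) x

theorem exists_subseq_summable_norm_apply [DecidableEq ι] {T : ℕ → lp (fun _ : ι => 𝕜) 1 →L[𝕜] F}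
    {C : ℝ} (hC : ∀ n, ‖T n‖ ≤ C)
    (hrow : ∀ n, Tendsto (fun k => T n (lp.single 1 k 1)) cofinite (𝓝 0))
    (hcol : ∀ k, Tendsto (fun n => T n (lp.single 1 k 1)) atTop (𝓝 0)) :
    ∃ φ : ℕ → ℕ, StrictMono φ ∧ ∀ x, Summable fun n => ‖T (φ n) x‖ := by
  have hbound : ∀ n k, ‖T n (lp.single 1 k 1)‖ ≤ C := fun n k => by
    simpa [lp.norm_single] using (T n).le_of_opNorm_le (hC n) (lp.single 1 k 1)
  obtain ⟨φ, hφ, hsum⟩ := exists_subseq_sum_norm_le hbound hrow hcol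
  exact ⟨φ, hφ, fun x => summable_of_sum_le (fun _ => norm_nonneg _) fun s =>
    sum_norm_apply_le_of_sum_norm_apply_single_le (fun k => hsum k s) x⟩

end LpSpaces

section WeakStar

theorem summable_mul_lp_one (x : lp (fun _ : ℕ => ℝ) 1) {c : ℕ → ℝ} (hc : Tendsto c atTop (𝓝 0)) :
    Summable fun k => c k * x k := by
  simpa only [mul_comm] using
    (hasSum_norm_lp_one x).summable.mul_tendsto_const (Nat.cofinite_eq_atTop ▸ hc)

theorem abs_tsum_mul_sub_sum_range_le (x : lp (fun _ : ℕ => ℝ) 1) {c : ℕ → ℝ}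
    (hc : Tendsto c atTop (𝓝 0)) {ε : ℝ} {N : ℕ} (hN : ∀ k ≥ N, |c k| ≤ ε) :
    |∑' k, c k * x k - ∑ k ∈ Finset.range N, c k * x k| ≤ ε * ‖x‖ := by
  have hx := (hasSum_norm_lp_one x).summable
  rw [← (summable_mul_lp_one x hc).sum_add_tsum_nat_add N, add_sub_cancel_left,
    ← Real.norm_eq_abs]
  calc ‖∑' k, c (k + N) * x (k + N)‖ ≤ ε * ∑' k, ‖x (k + N)‖ :=
        tsum_of_norm_bounded (((summable_nat_add_iff N).2 hx).hasSum.mul_left ε) fun k => by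
          rw [norm_mul]
          exact mul_le_mul_of_nonneg_right (hN _ (Nat.le_add_left N k)) (norm_nonneg _)
    _ ≤ ε * ‖x‖ := by
        refine mul_le_mul_of_nonneg_left ?_ ((abs_nonneg _).trans (hN N le_rfl))
        rw [← (hasSum_norm_lp_one x).tsum_eq, ← hx.sum_add_tsum_nat_add N]
        exact le_add_of_nonneg_left (Finset.sum_nonneg fun _ _ => norm_nonneg _)

theorem weakStarConvLp1_of_tendsto_apply {x : ℕ → lp (fun _ : ℕ => ℝ) 1}
    {x₀ : lp (fun _ : ℕ => ℝ) 1} {C : ℝ} (hC : ∀ n, ‖x n‖ ≤ C)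
    (hx : ∀ k, Tendsto (fun n => x n k) atTop (𝓝 (x₀ k))) : WeakStarConvLp1 x x₀ := by
  intro c hc
  have hunif : TendstoUniformly (fun N n => ∑ k ∈ Finset.range N, c k * x n k)
      (fun n => ∑' k, c k * x n k) atTop := by
    refine Metric.tendstoUniformly_iff.2 fun ε hε => ?_
    obtain ⟨δ, hδ, hδε⟩ := exists_pos_mul_lt hε C
    obtain ⟨N₀, hN₀⟩ := eventually_atTop.1 (eventually_norm_le_of_tendsto_zero hc hδ)
    filter_upwards [eventually_ge_atTop N₀] with N hN n
    calc |∑' k, c k * x n k - ∑ k ∈ Finset.range N, c k * x n k|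
        ≤ δ * ‖x n‖ := abs_tsum_mul_sub_sum_range_le _ hc fun k hk => hN₀ k (hN.trans hk)
      _ ≤ C * δ := by
          rw [mul_comm]
          exact mul_le_mul_of_nonneg_right (hC n) hδ.le
      _ < ε := hδε
  exact hunif.tendsto_of_eventually_tendsto
    (.of_forall fun N => tendsto_finsetSum _ fun k _ => (hx k).const_mul (c k))
    (summable_mul_lp_one x₀ hc).hasSum.tendsto_sum_nat

theorem exists_subseq_weakStarConvLp1 {x : ℕ → lp (fun _ : ℕ => ℝ) 1} {C : ℝ}
    (hC : ∀ n, ‖x n‖ ≤ C) :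
    ∃ (φ : ℕ → ℕ) (x₀ : lp (fun _ : ℕ => ℝ) 1),
      StrictMono φ ∧ WeakStarConvLp1 (fun n => x (φ n)) x₀ := by
  have hbound : ∀ n k, x n k ∈ Metric.closedBall (0 : ℝ) C := fun n k => by
    simpa using (lp.norm_apply_le_norm one_ne_zero (x n) k).trans (hC n)
  obtain ⟨l, -, φ, hφ, hl⟩ := (isCompact_univ_pi fun _ : ℕ =>
    isCompact_closedBall (0 : ℝ) C).tendsto_subseq (x := fun n k => x n k) fun n k _ => hbound n k
  have hl_mem : Memℓp l 1 := lp.memℓp_of_tendsto (F := fun n => x (φ n))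
    (isBounded_iff_forall_norm_le.2 ⟨C, Set.forall_mem_range.2 fun n => hC (φ n)⟩) hl
  exact ⟨φ, ⟨l, hl_mem⟩, hφ,
    weakStarConvLp1_of_tendsto_apply (fun n => hC (φ n)) (tendsto_pi_nhds.1 hl)⟩

theorem weakStarConvLp1_single : WeakStarConvLp1 (fun k => lp.single 1 k (1 : ℝ)) 0 := by
  have hnorm : ∀ n, ‖(lp.single 1 n 1 : lp (fun _ : ℕ => ℝ) 1)‖ ≤ 1 := fun n => by
    simp [lp.norm_single]
  refine weakStarConvLp1_of_tendsto_apply hnorm fun k => tendsto_const_nhds.congr' ?_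
  filter_upwards [eventually_gt_atTop k] with n hn
  simp [Pi.single_eq_of_ne hn.ne]

end WeakStar

section ClosedSubspacesOfRange

variable {Y : Type*} [NormedAddCommGroup Y] [NormedSpace ℝ Y] {A : lp (fun _ : ℕ => ℝ) 1 →L[ℝ] Y}

theorem exists_subseq_weakly_tendsto (hw : WeakStarToWeakSeqContinuous A) {M : Submodule ℝ Y}
    (hM : IsComplete (M : Set Y)) (hMA : (M : Set Y) ⊆ Set.range A) {y : ℕ → M} {R : ℝ}
    (hy : ∀ n, ‖y n‖ ≤ R) :
    ∃ φ : ℕ → ℕ, StrictMono φ ∧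
      ∀ f : M →L[ℝ] ℝ, ∃ l, Tendsto (fun n => f (y (φ n))) atTop (𝓝 l) := by
  obtain ⟨C, hC, hlift⟩ := exists_preimage_norm_le_of_subset_range A M hM hMA
  choose x hx hxC using fun n => hlift (y n) (y n).2
  obtain ⟨φ, x₀, hφ, hconv⟩ := exists_subseq_weakStarConvLp1 fun n =>
    (hxC n).trans (mul_le_mul_of_nonneg_left (hy n) hC.le)
  refine ⟨φ, hφ, fun f => ?_⟩
  obtain ⟨f', hf', -⟩ := exists_extension_norm_eq M f
  exact ⟨f' (A x₀), by simpa only [hx, hf'] using hw _ x₀ hconv f'⟩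

theorem exists_subseq_summable_abs_apply (hw : WeakStarToWeakSeqContinuous A)
    {g : ℕ → Y →L[ℝ] ℝ} {C : ℝ} (hg : ∀ n, ‖g n‖ ≤ C)
    (hgA : ∀ x, Tendsto (fun n => g n (A x)) atTop (𝓝 0)) :
    ∃ φ : ℕ → ℕ, StrictMono φ ∧ ∀ x, Summable fun n => |g (φ n) (A x)| := by
  have hsingle : ∀ f : Y →L[ℝ] ℝ,
      Tendsto (fun k => f (A (lp.single 1 k (1 : ℝ)))) cofinite (𝓝 0) := fun f => by
    simpa [Nat.cofinite_eq_atTop] using hw _ 0 weakStarConvLp1_single f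
  exact exists_subseq_summable_norm_apply (T := fun n => (g n).comp A)
    (fun n => ((g n).opNorm_comp_le A).trans (mul_le_mul_of_nonneg_right (hg n) (norm_nonneg A)))
    (fun n => hsingle (g n)) fun k => hgA _

theorem weakStarToWeak_implies_type_II_general (hw : WeakStarToWeakSeqContinuous A)
    (M : Submodule ℝ Y) (hM : IsComplete (M : Set Y)) (hMA : (M : Set Y) ⊆ Set.range A) :
    FiniteDimensional ℝ M := by
  by_contra hdim
  have : CompleteSpace M := hM.completeSpace_coe
  have : TopologicalSpace.SeparableSpace (lp (fun _ : ℕ => ℝ) 1) :=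
    separableSpace_lp ENNReal.one_ne_top
  obtain ⟨v, hv, hnull⟩ := exists_weaklyNull_one_le_norm hdim fun _ _ hy =>
    exists_subseq_weakly_tendsto hw hM hMA hy
  obtain ⟨g, r, hr, hg, hgv, hgA⟩ := exists_pointwiseNull_norming_of_weaklyNull A
    (v := fun n => (v n : Y)) hv fun f => hnull (f.comp M.subtypeL)
  obtain ⟨φ, hφ, hsum⟩ := exists_subseq_summable_abs_apply hw hg hgA
  have hdiag : Tendsto (fun n => g (φ n) (v (r (φ n)))) atTop (𝓝 0) :=
    tendsto_apply_zero_of_summable_norm_of_weaklyNull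
      (g := fun n => (g (φ n)).comp M.subtypeL) (v := fun n => v (r (φ n)))
      (fun y => by
        obtain ⟨x, hx⟩ := hMA y.2
        simpa [hx] using hsum x)
      (fun f => (hnull f).comp (hr.comp hφ.tendsto_atTop))
  have hhalf : (1 / 2 : ℝ) ≤ ‖(0 : ℝ)‖ := ge_of_tendsto' hdiag.norm fun n => hgv (φ n)
  norm_num at hhalf

end ClosedSubspacesOfRange

/-- If a bounded linear operator `A : ℓ¹ → Y` with infinite-dimensional range is
weak*-to-weak sequentially continuous, then its range contains no infinite-dimensional closed
subspace of `Y`; in particular the range is not closed (ill-posedness of type II). -/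
theorem weakStarToWeak_implies_type_II
    {Y : Type*} [NormedAddCommGroup Y] [NormedSpace ℝ Y] [CompleteSpace Y]
    (hY : ¬ FiniteDimensional ℝ Y)
    (A : lp (fun _ : ℕ => ℝ) 1 →L[ℝ] Y)
    (hinf : ¬ FiniteDimensional ℝ (LinearMap.range A.toLinearMap))
    (hw : WeakStarToWeakSeqContinuous A) :
    (∀ M : Submodule ℝ Y, IsClosed (M : Set Y) → (M : Set Y) ⊆ Set.range A →
      FiniteDimensional ℝ M) ∧
    ¬ IsClosed (Set.range A) := by
  exact ⟨fun M hM hMA => weakStarToWeak_implies_type_II_general hw M hM.isComplete hMA,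
    fun hclosed => hinf (weakStarToWeak_implies_type_II_general hw (LinearMap.range A.toLinearMap)
      hclosed.isComplete subset_rfl)⟩
end
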